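/- arXiv:2003.12968 — 2 statements merged into one kernel-verified Lean document; each statement's English description precedes it below -/
import Mathlib

section
/- Lemma 2, first claim (abstracted form): Let α ≥ 0, τ̄ ≥ 0, Ψ > 0, Δ > 0 and β*, β ≥ 0 be constants. Let X̂*, X̂, μ̂*, μ̂ be real random variables, N*, N random variables with N* ≥ 1 and N ≥ 1 almost surely, and d*, d random variables taking values in [0, τ̄], all on a common probability space. Assume: (i) μ̂* − μ̂ ≥ Δ almost surely; (ii) P(|X̂* − μ̂*| > √(Ψ/N*)) ≤ β*; (iii) P(|X̂ − μ̂| > √(Ψ/N)) ≤ β. Define C* = √(((1+ατ̄)/(1+α·d*))·Ψ/N*), C = √(((1+ατ̄)/(1+α·d))·Ψ/N), Q* = X̂* + C*, Q = X̂ + C. Then P( {Q* < Q} ∩ {N > ⌈4·(1+α·τ̄)·Ψ/Δ²⌉} ) ≤ β* + β. -/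
/-!
The bad event is contained, up to a null set, in the union of the two tail events, so the union
bound gives the claim. Indeed, every distance penalty `(1 + α τ) / (1 + α d)` lies in
`[1, 1 + α τ]`. The lower bound (`le_penalized`) shows that off the tail event of the optimal
option its index is at least its mean; the upper bound (`penalized_lt`) shows that once
`N > 4 (1 + α τ) Ψ / Δ²` the bonus of the suboptimal option is below `Δ / 2`, so off its tail
event its index is below its mean plus `Δ`. The gap `Δ` between the means then forbids `Q* < Q`.
-/

open MeasureTheory ProbabilityTheory

lemma le_penalized {α τ d x : ℝ} (hα : 0 ≤ α) (hd : d ∈ Set.Icc 0 τ) (hx : 0 ≤ x) :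
    x ≤ (1 + α * τ) / (1 + α * d) * x := by
  have h0 : 0 ≤ α * d := mul_nonneg hα hd.1
  have h1 : α * d ≤ α * τ := mul_le_mul_of_nonneg_left hd.2 hα
  have h2 : 1 ≤ (1 + α * τ) / (1 + α * d) := by
    rw [one_le_div (by linarith)]; linarith
  exact le_mul_of_one_le_left hx h2

lemma penalized_lt {α τ d Ψ Δ N : ℝ} (hα : 0 ≤ α) (hτ : 0 ≤ τ) (hd : 0 ≤ d) (hΨ : 0 < Ψ)
    (hΔ : 0 < Δ) (hN : 0 < N) (h : 4 * (1 + α * τ) * Ψ / Δ ^ 2 < N) :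
    Real.sqrt ((1 + α * τ) / (1 + α * d) * (Ψ / N)) < Δ / 2 := by
  have h0 : 0 ≤ α * d := mul_nonneg hα hd
  have h1 : 0 ≤ α * τ := mul_nonneg hα hτ
  have h2 : (1 + α * τ) / (1 + α * d) ≤ 1 + α * τ :=
    div_le_self (by linarith) (by linarith)
  rw [Real.sqrt_lt' (by linarith)]
  calc (1 + α * τ) / (1 + α * d) * (Ψ / N) ≤ (1 + α * τ) * (Ψ / N) :=
        mul_le_mul_of_nonneg_right h2 (by positivity)
    _ < (Δ / 2) ^ 2 := by
        rw [div_lt_iff₀ (by positivity)] at h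
        rw [← mul_div_assoc, div_lt_iff₀ hN]
        nlinarith

/-- Lemma 2, first claim (abstracted form). -/
theorem ucb_lemma_first_claim
    {Ω : Type*} {m0 : MeasurableSpace Ω} (P : Measure Ω) [IsProbabilityMeasure P]
    (α τ Ψ Δ βs β : ℝ)
    (hα : 0 ≤ α) (hτ : 0 ≤ τ) (hΨ : 0 < Ψ) (hΔ : 0 < Δ) (hβs : 0 ≤ βs) (hβ : 0 ≤ β)
    (Xs Xh μs μh Ns N ds d : Ω → ℝ)
    (hXs : Measurable Xs) (hXh : Measurable Xh)
    (hμs : Measurable μs) (hμh : Measurable μh)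
    (hNs : Measurable Ns) (hN : Measurable N)
    (hds : Measurable ds) (hd : Measurable d)
    (hNs1 : ∀ᵐ ω ∂P, 1 ≤ Ns ω) (hN1 : ∀ᵐ ω ∂P, 1 ≤ N ω)
    (hdsmem : ∀ ω, ds ω ∈ Set.Icc 0 τ) (hdmem : ∀ ω, d ω ∈ Set.Icc 0 τ)
    (hgap : ∀ᵐ ω ∂P, Δ ≤ μs ω - μh ω)
    (htail_s : P {ω | |Xs ω - μs ω| > Real.sqrt (Ψ / Ns ω)} ≤ ENNReal.ofReal βs)
    (htail : P {ω | |Xh ω - μh ω| > Real.sqrt (Ψ / N ω)} ≤ ENNReal.ofReal β)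
    (Qs Q : Ω → ℝ)
    (hQs : ∀ ω, Qs ω = Xs ω +
      Real.sqrt ((1 + α * τ) / (1 + α * ds ω) * (Ψ / Ns ω)))
    (hQ : ∀ ω, Q ω = Xh ω +
      Real.sqrt ((1 + α * τ) / (1 + α * d ω) * (Ψ / N ω))) :
    P ({ω | Qs ω < Q ω} ∩
        {ω | (⌈4 * (1 + α * τ) * Ψ / Δ ^ 2⌉ : ℝ) < N ω}) ≤
      ENNReal.ofReal (βs + β) := by
  rw [ENNReal.ofReal_add hβs hβ]
  refine le_trans ?_ ((measure_union_le _ _).trans (add_le_add htail_s htail))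
  apply measure_mono_ae
  filter_upwards [hNs1, hN1, hgap] with ω hns hn hg
  rintro ⟨hlt, hbig⟩
  change Qs ω < Q ω at hlt
  change (⌈4 * (1 + α * τ) * Ψ / Δ ^ 2⌉ : ℝ) < N ω at hbig
  change |Xs ω - μs ω| > Real.sqrt (Ψ / Ns ω) ∨ |Xh ω - μh ω| > Real.sqrt (Ψ / N ω)
  by_contra! hgood
  obtain ⟨hgs, hgh⟩ := hgood
  have hs := Real.sqrt_le_sqrt (le_penalized hα (hdsmem ω) (x := Ψ / Ns ω) (by positivity))
  have hh := Real.sqrt_le_sqrt (le_penalized hα (hdmem ω) (x := Ψ / N ω) (by positivity))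
  have hC := penalized_lt hα hτ (hdmem ω).1 hΨ hΔ (by linarith) ((Int.le_ceil _).trans_lt hbig)
  rw [hQs, hQ] at hlt
  rw [abs_le] at hgs hgh
  linarith [hgs.1, hgh.2]
end

section
/- Lemma 2, second claim (abstracted form): Let α ≥ 0, τ̄ ≥ 0, Ψ > 0, Δ > 0 and β*, β ≥ 0 be constants. Let X̂*, X̂, μ̂*, μ̂ be real random variables, N*, N random variables with N* ≥ 1 and N ≥ 1 almost surely, and d*, d random variables taking values in [0, τ̄], all on a common probability space. Assume: (i) μ̂* − μ̂ ≥ Δ almost surely; (ii) P(|X̂* − μ̂*| > √(Ψ/N*)) ≤ β*; (iii) P(|X̂ − μ̂| > √(Ψ/N)) ≤ β. Define C* = √(((1+ατ̄)/(1+α·d*))·Ψ/N*), C = √(((1+ατ̄)/(1+α·d))·Ψ/N), Q* = X̂* + C*, Q = X̂ + C. Then P(Q* < Q) ≤ β* + β + P( N ≤ ⌈4·(1+α·τ̄)·Ψ/Δ²⌉ ). -/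
open MeasureTheory ProbabilityTheory

/-!
The event `Qs < Q` is, up to a null set, contained in the union of the two tail events and of
`N ≤ ⌈4 (1 + α τ) Ψ / Δ ^ 2⌉`, so the claim is a union bound. Off these three events, the inflation
factor `(1 + α τ) / (1 + α δ)` lies in `[1, 1 + α τ]` for `δ ∈ [0, τ]`, so the optimal index
satisfies `Qs ≥ μs ≥ μh + Δ`, while `Q ≤ μh + 2 √((1 + α τ) Ψ / N) ≤ μh + Δ` once `N` is large.
-/

/-- The inflated confidence radius dominates the plain one. -/
lemma sqrt_le_sqrt_inflated {α τ δ x : ℝ} (hα : 0 ≤ α) (hδ : δ ∈ Set.Icc 0 τ) (hx : 0 ≤ x) :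
    Real.sqrt x ≤ Real.sqrt ((1 + α * τ) / (1 + α * δ) * x) := by
  have h0 : 0 ≤ α * δ := mul_nonneg hα hδ.1
  have h1 : α * δ ≤ α * τ := mul_le_mul_of_nonneg_left hδ.2 hα
  apply Real.sqrt_le_sqrt
  apply le_mul_of_one_le_left hx
  rw [one_le_div (by linarith)]
  linarith

/-- Once `n ≥ 4 (1 + α τ) Ψ / Δ ^ 2`, the inflated confidence radius is at most half the gap. -/
lemma sqrt_inflated_le_half_gap {α τ δ Ψ Δ n : ℝ} (hα : 0 ≤ α) (hδ : δ ∈ Set.Icc 0 τ)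
    (hΨ : 0 < Ψ) (hΔ : 0 < Δ) (hn : 0 < n) (hN : 4 * (1 + α * τ) * Ψ / Δ ^ 2 ≤ n) :
    Real.sqrt ((1 + α * τ) / (1 + α * δ) * (Ψ / n)) ≤ Δ / 2 := by
  have h0 : 0 ≤ α * δ := mul_nonneg hα hδ.1
  have h1 : α * δ ≤ α * τ := mul_le_mul_of_nonneg_left hδ.2 hα
  rw [div_le_iff₀ (by positivity)] at hN
  apply Real.sqrt_le_iff.mpr ⟨by positivity, ?_⟩
  calc (1 + α * τ) / (1 + α * δ) * (Ψ / n) ≤ (1 + α * τ) * (Ψ / n) := by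
        apply mul_le_mul_of_nonneg_right _ (by positivity)
        exact div_le_self (by linarith) (by linarith)
    _ ≤ (Δ / 2) ^ 2 := by
        rw [← mul_div_assoc, div_le_iff₀ hn]
        nlinarith

/-- Lemma 2, second claim (abstracted form). -/
theorem ucb_lemma_second_claim
    {Ω : Type*} {m0 : MeasurableSpace Ω} (P : Measure Ω) [IsProbabilityMeasure P]
    (α τ Ψ Δ βs β : ℝ)
    (hα : 0 ≤ α) (hτ : 0 ≤ τ) (hΨ : 0 < Ψ) (hΔ : 0 < Δ) (hβs : 0 ≤ βs) (hβ : 0 ≤ β)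
    (Xs Xh μs μh Ns N ds d : Ω → ℝ)
    (hXs : Measurable Xs) (hXh : Measurable Xh)
    (hμs : Measurable μs) (hμh : Measurable μh)
    (hNs : Measurable Ns) (hN : Measurable N)
    (hds : Measurable ds) (hd : Measurable d)
    (hNs1 : ∀ᵐ ω ∂P, 1 ≤ Ns ω) (hN1 : ∀ᵐ ω ∂P, 1 ≤ N ω)
    (hdsmem : ∀ ω, ds ω ∈ Set.Icc 0 τ) (hdmem : ∀ ω, d ω ∈ Set.Icc 0 τ)
    (hgap : ∀ᵐ ω ∂P, Δ ≤ μs ω - μh ω)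
    (htail_s : P {ω | |Xs ω - μs ω| > Real.sqrt (Ψ / Ns ω)} ≤ ENNReal.ofReal βs)
    (htail : P {ω | |Xh ω - μh ω| > Real.sqrt (Ψ / N ω)} ≤ ENNReal.ofReal β)
    (Qs Q : Ω → ℝ)
    (hQs : ∀ ω, Qs ω = Xs ω +
      Real.sqrt ((1 + α * τ) / (1 + α * ds ω) * (Ψ / Ns ω)))
    (hQ : ∀ ω, Q ω = Xh ω +
      Real.sqrt ((1 + α * τ) / (1 + α * d ω) * (Ψ / N ω))) :
    P {ω | Qs ω < Q ω} ≤
      ENNReal.ofReal (βs + β) +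
        P {ω | N ω ≤ (⌈4 * (1 + α * τ) * Ψ / Δ ^ 2⌉ : ℝ)} := by
  have hsub : P {ω | Qs ω < Q ω} ≤ P (({ω | |Xs ω - μs ω| > Real.sqrt (Ψ / Ns ω)} ∪
      {ω | |Xh ω - μh ω| > Real.sqrt (Ψ / N ω)}) ∪
      {ω | N ω ≤ (⌈4 * (1 + α * τ) * Ψ / Δ ^ 2⌉ : ℝ)}) := by
    apply measure_mono_ae
    filter_upwards [hNs1, hN1, hgap] with ω h1 h2 hg hlt
    by_contra hbad
    have hbad' : ¬ ((|Xs ω - μs ω| > Real.sqrt (Ψ / Ns ω) ∨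
        |Xh ω - μh ω| > Real.sqrt (Ψ / N ω)) ∨
        N ω ≤ (⌈4 * (1 + α * τ) * Ψ / Δ ^ 2⌉ : ℝ)) := hbad
    simp only [not_or, not_lt, not_le, gt_iff_lt] at hbad'
    obtain ⟨⟨ha, hb⟩, hc⟩ := hbad'
    have hlt' : Qs ω < Q ω := hlt
    rw [hQs, hQ] at hlt'
    have e1 := sqrt_le_sqrt_inflated hα (hdsmem ω) (x := Ψ / Ns ω) (by positivity)
    have e2 := sqrt_le_sqrt_inflated hα (hdmem ω) (x := Ψ / N ω) (by positivity)
    have e3 := sqrt_inflated_le_half_gap hα (hdmem ω) hΨ hΔ (n := N ω) (by linarith)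
      ((Int.le_ceil _).trans hc.le)
    have := (abs_le.mp ha).1
    have := (abs_le.mp hb).2
    linarith
  refine hsub.trans ((measure_union_le _ _).trans ?_)
  gcongr
  rw [ENNReal.ofReal_add hβs hβ]
  exact (measure_union_le _ _).trans (add_le_add htail_s htail)
end
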